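/- Fix m ≥ 1 and n ≥ 2 and work on W := V^{⊗(m+n)}, regarding the first m factors as the module M = V^{⊗m}. Define T_i := c_{m+i} for 1 ≤ i ≤ n−1, T_n := J applied in the last tensor factor, P_1 := T_1T_2⋯T_{n−1}·T_n·T_{n−1}⋯T_2T_1, D := (c_m∘c_{m−1}∘⋯∘c_1)∘(c_1∘c_2∘⋯∘c_m) (the double braiding of M past the (m+1)-st factor, acting in the first m+1 factors of W), and T_0 := P_1⁻¹ ∘ D⁻¹. Then T_0, T_1, …, T_n satisfy the defining relations of the affine braid group of type C∨C_n: T_iT_j = T_jT_i for |i−j| ≥ 2 (including T_0T_i = T_iT_0 for 2 ≤ i ≤ n), T_iT_{i+1}T_i = T_{i+1}T_iT_{i+1} for 1 ≤ i ≤ n−2, T_0T_1T_0T_1 = T_1T_0T_1T_0, and T_{n−1}T_nT_{n−1}T_n = T_nT_{n−1}T_nT_{n−1}; hence they define a representation of the affine braid group of type C∨C_n on W. -/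

import Mathlib

/-!
Write `s k` for the braiding in the 0-based factors `k, k+1` (`k + 1 < N := m + n`) and `s (N-1)`
for `J` in the last factor.  These operators satisfy the relations of the braid group of type `B_N`:
distant ones commute, and adjacent ones satisfy the braid relation, except that the last two satisfy
the four-term relation.  The latter two relations are `hbraid` and `hrefl` tensored with an identity
and transported along associativity isomorphisms.  Everything else is a computation in this group.

The elements `D_0 = 1`, `D_{k+1} = s_k D_k s_k` and `P_{N-1} = s_{N-1}`, `P_j = s_j P_{j+1} s_j`
satisfy four-term relations with the next generator: `D_k` with `s_k`, and `P_{j+1}` with `s_j`.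
Both follow by induction from one computation, `fourTerm_step`.  Moreover `D_k` commutes with `s_j`
for `j > k`, and `P_j` commutes with `s_i` for `i > j`.

The operator `T_0` is the inverse of `D_m P_m`, so it commutes with `s_{m+1}, …, s_{N-1}`, which
are `T_2, …, T_n`.  With `t = s_m = T_1`, `D = D_m` and `P = P_{m+1}`, one has `T_0⁻¹ = D t P t`,
where `D` and `P` commute and each satisfies the four-term relation with `t`.  This gives the
four-term relation between `T_0` and `T_1`.
-/

open TensorProduct

/-- The iterated tensor power `V^{⊗n}` (with an extra harmless factor `K` at the end):
`TPow K V 0 = K` and `TPow K V (n+1) = V ⊗ TPow K V n`. -/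
noncomputable def TPow (K : Type) [Field K] (V : Type) [AddCommGroup V] [Module K V] :
    ℕ → ModuleCat K
  | 0 => ModuleCat.of K K
  | n + 1 => ModuleCat.of K (TensorProduct K V (TPow K V n))

variable {K : Type} [Field K] {V : Type} [AddCommGroup V] [Module K V]

/-- The operator `c_{i+1}`: an endomorphism `c` of `V ⊗ V` applied in the (0-based) tensor
factors `i, i+1` of `V^{⊗n}`, identity elsewhere (and identity if out of range). -/
noncomputable def opAt (c : Module.End K (TensorProduct K V V)) :
    (i n : ℕ) → Module.End K ↥(TPow K V n)
  | 0, n + 2 =>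
      (show Module.End K (TensorProduct K V (TensorProduct K V ↥(TPow K V n))) from
        (TensorProduct.assoc K V V ↥(TPow K V n)).conj
          (LinearMap.rTensor ↥(TPow K V n) c))
  | i + 1, n + 1 => LinearMap.lTensor V (opAt c i n)
  | _, _ => LinearMap.id

/-- The operator `id^{⊗(n−1)} ⊗ J`: an endomorphism `J` of `V` applied in the last tensor
factor of `V^{⊗n}`. -/
noncomputable def opLast (J : Module.End K V) : (n : ℕ) → Module.End K ↥(TPow K V n)
  | 0 => LinearMap.id
  | 1 => LinearMap.rTensor ↥(TPow K V 0) J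
  | n + 2 => LinearMap.lTensor V (opLast J (n + 1))

/-- `T_{(i⋯j)}` for a family of elements of a monoid. -/
def Tseg {G : Type*} [Monoid G] (t : ℕ → G) (i j : ℕ) : G :=
  if i ≤ j then ((List.range (j - i)).map fun k => t (i + k)).prod
  else ((List.range (i - j)).map fun k => t (i - 1 - k)).prod

/-- `P_i := T_{(i⋯n)} T_n T_{(n⋯i)}`. -/
def Pel {G : Type*} [Monoid G] (t : ℕ → G) (n i : ℕ) : G :=
  Tseg t i n * t n * Tseg t n i

/-- On `W := V^{⊗(m+n)}` (the first `m` factors being the module `M = V^{⊗m}`):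
`T_i := c_{m+i}` for `1 ≤ i ≤ n−1` and `T_n := J` applied in the last tensor factor. -/
noncomputable def Tb (c : Module.End K (TensorProduct K V V)) (J : Module.End K V)
    (m n : ℕ) (i : ℕ) : Module.End K ↥(TPow K V (m + n)) :=
  if i = n then opLast J (m + n) else opAt c (m + i - 1) (m + n)

/-- `D := (c_m ∘ ⋯ ∘ c_1) ∘ (c_1 ∘ ⋯ ∘ c_m)`, the double braiding of `M = V^{⊗m}` past the
`(m+1)`-st factor, acting in the first `m+1` factors of `V^{⊗(m+n)}`. -/
noncomputable def Dop (c : Module.End K (TensorProduct K V V)) (m n : ℕ) :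
    Module.End K ↥(TPow K V (m + n)) :=
  ((List.range m).map fun k => opAt c (m - 1 - k) (m + n)).prod
    * ((List.range m).map fun k => opAt c k (m + n)).prod

/-- The operators `T_0, T_1, …, T_n` on `W = V^{⊗(m+n)}`, where
`T_0 := P_1⁻¹ ∘ D⁻¹ = (D ∘ P_1)⁻¹` (realized via `Ring.inverse`). -/
noncomputable def Taff (c : Module.End K (TensorProduct K V V)) (J : Module.End K V)
    (m n : ℕ) (i : ℕ) : Module.End K ↥(TPow K V (m + n)) :=
  if i = 0 then Ring.inverse (Dop c m n * Pel (Tb c J m n) n 1) else Tb c J m n i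

/-! ### Computations in a monoid -/

section Abstract

variable {G : Type*} [Monoid G]

/-- The four-term relation passes from `(d, s)` to `(s d s, t)` when `s, t` satisfy the braid
relation and `t` commutes with `d`. -/
theorem fourTerm_step {d s t : G} (hst : s * t * s = t * s * t) (htd : t * d = d * t)
    (h : d * s * d * s = s * d * s * d) :
    (s * d * s) * t * (s * d * s) * t = t * (s * d * s) * t * (s * d * s) := by
  calc (s * d * s) * t * (s * d * s) * t
      = s * d * (s * t * s) * d * s * t := by simp only [mul_assoc]
    _ = s * (d * t) * s * (t * d) * s * t := by rw [hst]; simp only [mul_assoc]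
    _ = s * t * d * s * d * (t * s * t) := by rw [htd, ← htd]; simp only [mul_assoc, htd]
    _ = s * t * (d * s * d * s) * t * s := by rw [← hst]; simp only [mul_assoc]
    _ = (s * t * s) * d * s * (d * t) * s := by rw [h]; simp only [mul_assoc]
    _ = t * s * (t * d) * s * t * d * s := by rw [hst, ← htd]; simp only [mul_assoc]
    _ = t * s * d * (t * s * t) * d * s := by rw [htd]; simp only [mul_assoc]
    _ = t * (s * d * s) * t * (s * d * s) := by rw [← hst]; simp only [mul_assoc]

/-- `s t p t s` commutes with `t` when `s, t` satisfy the braid relation and `p` commutes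
with `s`. -/
theorem commute_conj_braid {p s t : G} (hst : s * t * s = t * s * t) (hps : p * s = s * p) :
    Commute t (s * (t * p * t) * s) := by
  change t * (s * (t * p * t) * s) = (s * (t * p * t) * s) * t
  calc t * (s * (t * p * t) * s) = (t * s * t) * p * t * s := by simp only [mul_assoc]
    _ = s * t * (s * p) * t * s := by rw [← hst]; simp only [mul_assoc]
    _ = s * t * p * (s * t * s) := by rw [← hps]; simp only [mul_assoc]
    _ = (s * (t * p * t) * s) * t := by rw [hst]; simp only [mul_assoc]

/-- The four-term relation between `(d t p t)⁻¹` and `t`. -/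
theorem fourTerm_inv {H : Type*} [Group H] {d t p : H} (hdp : d * p = p * d)
    (hd : d * t * d * t = t * d * t * d) (hp : p * t * p * t = t * p * t * p) :
    (d * (t * p * t))⁻¹ * t * (d * (t * p * t))⁻¹ * t
      = t * (d * (t * p * t))⁻¹ * t * (d * (t * p * t))⁻¹ := by
  have key : d * t * p * d * t * p * t = t * (d * t * p * d * t * p) := by
    calc d * t * p * d * t * p * t = d * t * (d * p) * t * p * t := by
          rw [hdp]; simp only [mul_assoc]
      _ = d * t * d * (p * t * p * t) := by simp only [mul_assoc]
      _ = (d * t * d * t) * p * t * p := by rw [hp]; simp only [mul_assoc]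
      _ = t * d * t * (d * p) * t * p := by rw [hd]; simp only [mul_assoc]
      _ = t * (d * t * p * d * t * p) := by rw [hdp]; simp only [mul_assoc]
  -- inverting both sides of this identity gives the claim
  have key2 : t⁻¹ * (d * (t * p * t)) * t⁻¹ * (d * (t * p * t))
      = (d * (t * p * t)) * t⁻¹ * (d * (t * p * t)) * t⁻¹ := by
    calc t⁻¹ * (d * (t * p * t)) * t⁻¹ * (d * (t * p * t))
        = t⁻¹ * (d * t * p * d * t * p * t) := by group
      _ = d * t * p * d * t * p := by rw [key]; group
      _ = _ := by group
  have := congrArg (·⁻¹) key2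
  simpa [mul_assoc] using this

theorem fourTerm_ringInverse {R : Type*} [MonoidWithZero R] {d t p : R} (hd : IsUnit d)
    (ht : IsUnit t) (hp : IsUnit p) (hdp : d * p = p * d)
    (hdt : d * t * d * t = t * d * t * d) (hpt : p * t * p * t = t * p * t * p) :
    Ring.inverse (d * (t * p * t)) * t * Ring.inverse (d * (t * p * t)) * t
      = t * Ring.inverse (d * (t * p * t)) * t * Ring.inverse (d * (t * p * t)) := by
  obtain ⟨d, rfl⟩ := hd
  obtain ⟨t, rfl⟩ := ht
  obtain ⟨p, rfl⟩ := hp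
  have key := fourTerm_inv (d := d) (t := t) (p := p) (Units.ext hdp) (Units.ext hdt)
    (Units.ext hpt)
  rw [← Units.val_mul, ← Units.val_mul, ← Units.val_mul, Ring.inverse_unit]
  exact congrArg Units.val key

/-- The elements `s 0, …, s M` satisfy the relations of the braid group of type `B`, the
special generator being `s M`. -/
structure BRel (s : ℕ → G) (M : ℕ) : Prop where
  comm : ∀ i j, i + 2 ≤ j → j ≤ M → s i * s j = s j * s i
  braid : ∀ i, i + 1 < M → s i * s (i + 1) * s i = s (i + 1) * s i * s (i + 1)
  four : ∀ i, i + 1 = M → s i * s (i + 1) * s i * s (i + 1) = s (i + 1) * s i * s (i + 1) * s i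

/-- `D_k = s_{k-1} ⋯ s_0 s_0 ⋯ s_{k-1}`. -/
def Drec (s : ℕ → G) : ℕ → G
  | 0 => 1
  | k + 1 => s k * Drec s k * s k

/-- `Prec s M k = s_{M-k} ⋯ s_{M-1} s_M s_{M-1} ⋯ s_{M-k}`, written with `k` counted from the
special end. -/
def Prec (s : ℕ → G) (M : ℕ) : ℕ → G
  | 0 => s M
  | k + 1 => s (M - (k + 1)) * Prec s M k * s (M - (k + 1))

theorem Drec_comm {s : ℕ → G} {g : G} {k : ℕ} (h : ∀ i < k, Commute g (s i)) :
    Commute g (Drec s k) := by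
  induction k with
  | zero => exact Commute.one_right g
  | succ k ih =>
    have hk := h k (by omega)
    exact (hk.mul_right (ih fun i hi => h i (by omega))).mul_right hk

theorem Prec_comm {s : ℕ → G} {M : ℕ} {g : G} {k : ℕ}
    (h : ∀ i, M - k ≤ i → i ≤ M → Commute g (s i)) : Commute g (Prec s M k) := by
  induction k with
  | zero => exact h M (by omega) le_rfl
  | succ k ih =>
    have hk := h (M - (k + 1)) le_rfl (by omega)
    exact (hk.mul_right (ih fun i hi => h i (by omega))).mul_right hk

theorem Drec_isUnit {s : ℕ → G} (h : ∀ i, IsUnit (s i)) (k : ℕ) : IsUnit (Drec s k) := by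
  induction k with
  | zero => exact isUnit_one
  | succ k ih => exact ((h k).mul ih).mul (h k)

theorem Prec_isUnit {s : ℕ → G} (h : ∀ i, IsUnit (s i)) (M k : ℕ) : IsUnit (Prec s M k) := by
  induction k with
  | zero => exact h M
  | succ k ih => exact ((h _).mul ih).mul (h _)

theorem BRel.Drec_four {s : ℕ → G} {M : ℕ} (hs : BRel s M) {k : ℕ} (hk : k < M) :
    Drec s k * s k * Drec s k * s k = s k * Drec s k * s k * Drec s k := by
  induction k with
  | zero => simp [Drec]
  | succ k ih =>
    exact fourTerm_step (hs.braid k hk)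
      (Drec_comm fun i hi => (hs.comm i (k + 1) (by omega) hk.le).symm) (ih (by omega))

theorem BRel.Prec_four {s : ℕ → G} {M : ℕ} (hs : BRel s M) {k j : ℕ} (hk : j + k + 1 = M) :
    Prec s M k * s j * Prec s M k * s j = s j * Prec s M k * s j * Prec s M k := by
  induction k generalizing j with
  | zero => subst hk; exact (hs.four j rfl).symm
  | succ k ih =>
    have e : M - (k + 1) = j + 1 := by omega
    simp only [Prec, e]
    exact fourTerm_step (hs.braid j (by omega)).symm
      (Prec_comm fun i hi hi' => hs.comm j i (by omega) hi') (ih (by omega))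

theorem BRel.Prec_comm_gt {s : ℕ → G} {M : ℕ} (hs : BRel s M) {k i : ℕ} (hk : k ≤ M)
    (hi : M - k < i) (hiM : i ≤ M) : Commute (s i) (Prec s M k) := by
  induction k with
  | zero => omega
  | succ k ih =>
    rcases Nat.lt_or_ge (M - k) i with h | h
    · have hc : Commute (s i) (s (M - (k + 1))) := (hs.comm _ i (by omega) hiM).symm
      exact (hc.mul_right (ih (by omega) h)).mul_right hc
    · obtain ⟨j, rfl⟩ : ∃ j, M = j + (k + 1) := ⟨M - (k + 1), by omega⟩
      obtain rfl : i = j + 1 := by omega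
      cases k with
      | zero =>
        have := hs.four j rfl
        simp only [Prec, Nat.add_sub_cancel]
        change _ * _ = _ * _
        simpa only [mul_assoc] using this.symm
      | succ k =>
        have e1 : j + (k + 1 + 1) - (k + 1) = j + 1 := by omega
        have e2 : j + (k + 1 + 1) - (k + 1 + 1) = j := by omega
        simp only [Prec, e1, e2]
        exact commute_conj_braid (hs.braid j (by omega))
          (Prec_comm fun i hi hi' => hs.comm j i (by omega) hi').symm

theorem Pel_self (t : ℕ → G) (n : ℕ) : Pel t n n = t n := by
  simp [Pel, Tseg]

theorem Tseg_up (t : ℕ → G) {i n : ℕ} (h : i < n) :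
    Tseg t i n = t i * Tseg t (i + 1) n := by
  obtain ⟨d, rfl⟩ : ∃ d, n = i + 1 + d := ⟨n - (i + 1), by omega⟩
  have e : i + 1 + d - i = d + 1 := by omega
  simp only [Tseg, if_pos h.le, if_pos (show i + 1 ≤ i + 1 + d by omega), e,
    List.range_succ_eq_map, Nat.add_sub_cancel_left]
  simp [Function.comp_def, add_assoc, add_comm 1]

theorem Tseg_down (t : ℕ → G) {i n : ℕ} (h : i < n) :
    Tseg t n i = Tseg t n (i + 1) * t i := by
  obtain ⟨d, rfl⟩ : ∃ d, n = i + 1 + d := ⟨n - (i + 1), by omega⟩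
  have e : i + 1 + d - i = d + 1 := by omega
  have e' : i + 1 + d - 1 - d = i := by omega
  cases d with
  | zero => simp [Tseg]
  | succ d =>
    simp only [Tseg, if_neg (show ¬ i + 1 + (d + 1) ≤ i by omega),
      if_neg (show ¬ i + 1 + (d + 1) ≤ i + 1 by omega), e, Nat.add_sub_cancel_left]
    rw [List.range_succ, List.map_append, List.prod_append]
    simp only [List.map_cons, List.map_nil, List.prod_singleton, e']

theorem Pel_step (t : ℕ → G) {i n : ℕ} (h : i < n) :
    Pel t n i = t i * Pel t n (i + 1) * t i := by
  simp only [Pel, Tseg_up t h, Tseg_down t h, mul_assoc]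

/-- Identification of `P_i` with the recursively defined element; the index is shifted by the `m`
factors of `M` and by the passage to 0-based positions. -/
theorem Pel_eq_Prec {s t : ℕ → G} {m n : ℕ}
    (h : ∀ i, 1 ≤ i → i ≤ n → t i = s (m + i - 1)) (k : ℕ) (hk : k < n) :
    Pel t n (n - k) = Prec s (m + n - 1) k := by
  induction k with
  | zero => simp only [Nat.sub_zero, Pel_self, Prec]; exact h n (by omega) le_rfl
  | succ k ih =>
    have e : n - (k + 1) + 1 = n - k := by omega
    have e2 : m + (n - (k + 1)) - 1 = m + n - 1 - (k + 1) := by omega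
    rw [Pel_step t (by omega), e, ih (by omega), h _ (by omega) (by omega), e2, Prec]

theorem Dprod_eq_Drec (s : ℕ → G) (m : ℕ) :
    ((List.range m).map fun k => s (m - 1 - k)).prod * ((List.range m).map s).prod
      = Drec s m := by
  induction m with
  | zero => simp [Drec]
  | succ m ih =>
    have e : ((List.range (m + 1)).map fun k => s (m + 1 - 1 - k)).prod
        = s m * ((List.range m).map fun k => s (m - 1 - k)).prod := by
      rw [List.range_succ_eq_map]
      simp only [List.map_cons, List.prod_cons, List.map_map, Nat.add_sub_cancel, Nat.sub_zero]
      congr 2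
      refine List.map_congr_left fun k _ => ?_
      simp only [Function.comp_apply]
      congr 1
      omega
    rw [e, Drec, ← ih, List.range_succ, List.map_append, List.prod_append]
    simp [mul_assoc]

end Abstract

/-! ### Operators on tensor powers -/

section Tensor

variable {X : Type} [AddCommGroup X] [Module K X]

/-- `c ⊗ id_X` transported to `V ⊗ (V ⊗ X)`. -/
noncomputable def cOn (X : Type) [AddCommGroup X] [Module K X]
    (c : Module.End K (V ⊗[K] V)) : Module.End K (V ⊗[K] (V ⊗[K] X)) :=
  (TensorProduct.assoc K V V X).conj (LinearMap.rTensor X c)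

theorem cOn_tmul (c : Module.End K (V ⊗[K] V)) (x y : V) (z : X) :
    cOn X c (x ⊗ₜ (y ⊗ₜ z)) = TensorProduct.assoc K V V X (c (x ⊗ₜ y) ⊗ₜ z) := rfl

theorem cOn_comm (c : Module.End K (V ⊗[K] V)) (f : Module.End K X) :
    cOn X c * LinearMap.lTensor V (LinearMap.lTensor V f)
      = LinearMap.lTensor V (LinearMap.lTensor V f) * cOn X c := by
  refine TensorProduct.ext_threefold' fun x y z => ?_
  simp only [Module.End.mul_apply, LinearMap.lTensor_tmul, cOn_tmul]
  generalize c (x ⊗ₜ y) = w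
  induction w with
  | zero => simp
  | add a b ha hb => simp only [TensorProduct.add_tmul, map_add, ha, hb]
  | tmul a b => simp

/-- Tensoring an endomorphism with `id_X` and transporting it along `e`, as a homomorphism. -/
noncomputable def transportHom {A B : Type} [AddCommGroup A] [Module K A] [AddCommGroup B]
    [Module K B] (X : Type) [AddCommGroup X] [Module K X] (e : (A ⊗[K] X) ≃ₗ[K] B) :
    Module.End K A →* Module.End K B where
  toFun f := e.conj (LinearMap.rTensor X f)
  map_one' := by
    rw [Module.End.one_eq_id, LinearMap.rTensor_id, LinearEquiv.conj_id, Module.End.one_eq_id]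
  map_mul' f g := by
    rw [LinearMap.rTensor_mul, Module.End.mul_eq_comp, LinearEquiv.conj_comp,
      Module.End.mul_eq_comp]

/-- `f ↦ id_V ⊗ f` as a homomorphism. -/
noncomputable def lTensorHom (V X : Type) [AddCommGroup V] [Module K V] [AddCommGroup X]
    [Module K X] : Module.End K X →* Module.End K (V ⊗[K] X) where
  toFun f := LinearMap.lTensor V f
  map_one' := LinearMap.lTensor_id V X
  map_mul' f g := LinearMap.lTensor_mul V f g

theorem transportHom_lTensor (J : Module.End K V) :
    transportHom X (TensorProduct.assoc K V V X) (LinearMap.lTensor V J)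
      = LinearMap.lTensor V (LinearMap.rTensor X J) :=
  TensorProduct.ext_threefold' fun _ _ _ => rfl

theorem cOn_four {c : Module.End K (V ⊗[K] V)} {J : Module.End K V}
    (h : c * LinearMap.lTensor V J * c * LinearMap.lTensor V J
        = LinearMap.lTensor V J * c * LinearMap.lTensor V J * c) :
    cOn X c * LinearMap.lTensor V (LinearMap.rTensor X J) * cOn X c
        * LinearMap.lTensor V (LinearMap.rTensor X J)
      = LinearMap.lTensor V (LinearMap.rTensor X J) * cOn X c
        * LinearMap.lTensor V (LinearMap.rTensor X J) * cOn X c := by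
  have := congrArg (transportHom X (TensorProduct.assoc K V V X)) h
  simp only [map_mul, transportHom_lTensor] at this
  exact this

/-- The rebracketing `(V ⊗ (V ⊗ V)) ⊗ X ≃ V ⊗ (V ⊗ (V ⊗ X))`. -/
noncomputable def assocThree (V X : Type) [AddCommGroup V] [Module K V] [AddCommGroup X]
    [Module K X] : ((V ⊗[K] (V ⊗[K] V)) ⊗[K] X) ≃ₗ[K] (V ⊗[K] (V ⊗[K] (V ⊗[K] X))) :=
  (TensorProduct.assoc K V (V ⊗[K] V) X) ≪≫ₗ
    (TensorProduct.congr (LinearEquiv.refl K V) (TensorProduct.assoc K V V X))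

theorem transportHom_assocThree_right (c : Module.End K (V ⊗[K] V)) :
    transportHom X (assocThree V X) (LinearMap.lTensor V c) = LinearMap.lTensor V (cOn X c) := by
  refine TensorProduct.ext_threefold' fun x y z => ?_
  induction z with
  | zero => simp
  | add a b ha hb => simp only [TensorProduct.tmul_add, map_add, ha, hb]
  | tmul a b => rfl

theorem transportHom_assocThree_left (c : Module.End K (V ⊗[K] V)) :
    transportHom X (assocThree V X) ((TensorProduct.assoc K V V V).conj (LinearMap.rTensor V c))
      = cOn (V ⊗[K] X) c := by
  refine TensorProduct.ext_threefold' fun x y z => ?_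
  induction z with
  | zero => simp
  | add a b ha hb => simp only [TensorProduct.tmul_add, map_add, ha, hb]
  | tmul a b =>
    rw [cOn_tmul]
    change assocThree V X ((TensorProduct.assoc K V V V (c (x ⊗ₜ y) ⊗ₜ a)) ⊗ₜ b) = _
    generalize c (x ⊗ₜ y) = w
    induction w with
    | zero => simp
    | add p q hp hq => simp only [TensorProduct.add_tmul, map_add, hp, hq]
    | tmul p q => rfl

theorem cOn_braid {c : Module.End K (V ⊗[K] V)}
    (h : ((TensorProduct.assoc K V V V).conj (LinearMap.rTensor V c)) * (LinearMap.lTensor V c)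
          * ((TensorProduct.assoc K V V V).conj (LinearMap.rTensor V c))
        = (LinearMap.lTensor V c)
          * ((TensorProduct.assoc K V V V).conj (LinearMap.rTensor V c))
          * (LinearMap.lTensor V c)) :
    cOn (V ⊗[K] X) c * LinearMap.lTensor V (cOn X c) * cOn (V ⊗[K] X) c
      = LinearMap.lTensor V (cOn X c) * cOn (V ⊗[K] X) c * LinearMap.lTensor V (cOn X c) := by
  have := congrArg (transportHom X (assocThree V X)) h
  simpa only [map_mul, transportHom_assocThree_left, transportHom_assocThree_right] using this

theorem opAt_isUnit {c : Module.End K (V ⊗[K] V)} (hc : IsUnit c) (i N : ℕ) :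
    IsUnit (opAt c i N) := by
  induction i generalizing N with
  | zero =>
    match N with
    | 0 => exact isUnit_one
    | 1 => exact isUnit_one
    | N + 2 => exact hc.map (transportHom (TPow K V N) (TensorProduct.assoc K V V (TPow K V N)))
  | succ i ih =>
    match N with
    | 0 => exact isUnit_one
    | N + 1 => exact (ih N).map (lTensorHom V (TPow K V N))

theorem opLast_isUnit {J : Module.End K V} (hJ : IsUnit J) (N : ℕ) : IsUnit (opLast J N) := by
  induction N with
  | zero => exact isUnit_one
  | succ N ih =>
    match N with
    | 0 => exact hJ.map (transportHom (TPow K V 0) (LinearEquiv.refl K (V ⊗[K] (TPow K V 0))))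
    | N + 1 => exact ih.map (lTensorHom V (TPow K V (N + 1)))

theorem opAt_comm (c : Module.End K (V ⊗[K] V)) (i j N : ℕ) (h : i + 2 ≤ j) :
    opAt c i N * opAt c j N = opAt c j N * opAt c i N := by
  induction i generalizing j N with
  | zero =>
    obtain ⟨j, rfl⟩ : ∃ k, j = k + 2 := ⟨j - 2, by omega⟩
    match N with
    | 0 => rfl
    | 1 => exact (Commute.one_left (opAt c (j + 2) 1)).eq
    | N + 2 => exact cOn_comm c (opAt c j N)
  | succ i ih =>
    obtain ⟨j, rfl⟩ : ∃ k, j = k + 1 := ⟨j - 1, by omega⟩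
    match N with
    | 0 => rfl
    | N + 1 => exact Commute.map (ih j N (by omega)) (lTensorHom V (TPow K V N))

theorem opAt_opLast_comm (c : Module.End K (V ⊗[K] V)) (J : Module.End K V) (i N : ℕ)
    (h : i + 2 < N) : opAt c i N * opLast J N = opLast J N * opAt c i N := by
  induction i generalizing N with
  | zero =>
    obtain ⟨N, rfl⟩ : ∃ k, N = k + 3 := ⟨N - 3, by omega⟩
    exact cOn_comm c (opLast J (N + 1))
  | succ i ih =>
    obtain ⟨N, rfl⟩ : ∃ k, N = k + 2 := ⟨N - 2, by omega⟩
    exact Commute.map (ih (N + 1) (by omega)) (lTensorHom V (TPow K V (N + 1)))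

theorem opAt_braid {c : Module.End K (V ⊗[K] V)}
    (h : ((TensorProduct.assoc K V V V).conj (LinearMap.rTensor V c)) * (LinearMap.lTensor V c)
          * ((TensorProduct.assoc K V V V).conj (LinearMap.rTensor V c))
        = (LinearMap.lTensor V c)
          * ((TensorProduct.assoc K V V V).conj (LinearMap.rTensor V c))
          * (LinearMap.lTensor V c)) (i N : ℕ) (hi : i + 2 < N) :
    opAt c i N * opAt c (i + 1) N * opAt c i N
      = opAt c (i + 1) N * opAt c i N * opAt c (i + 1) N := by
  induction i generalizing N with
  | zero =>
    obtain ⟨N, rfl⟩ : ∃ k, N = k + 3 := ⟨N - 3, by omega⟩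
    exact cOn_braid (X := TPow K V N) h
  | succ i ih =>
    obtain ⟨N, rfl⟩ : ∃ k, N = k + 1 := ⟨N - 1, by omega⟩
    have := congrArg (lTensorHom V (TPow K V N)) (ih N (by omega))
    simp only [map_mul] at this
    exact this

theorem opAt_opLast_four {c : Module.End K (V ⊗[K] V)} {J : Module.End K V}
    (h : c * LinearMap.lTensor V J * c * LinearMap.lTensor V J
        = LinearMap.lTensor V J * c * LinearMap.lTensor V J * c) (i : ℕ) :
    opAt c i (i + 2) * opLast J (i + 2) * opAt c i (i + 2) * opLast J (i + 2)
      = opLast J (i + 2) * opAt c i (i + 2) * opLast J (i + 2) * opAt c i (i + 2) := by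
  induction i with
  | zero => exact cOn_four (X := TPow K V 0) h
  | succ i ih =>
    have := congrArg (lTensorHom V (TPow K V (i + 2))) ih
    simp only [map_mul] at this
    exact this

/-- The type `B_N` generators on `V^{⊗N}`: the braiding in positions `i, i+1` for `i ≠ N - 1`
(0-based), and `J` in the last position for `i = N - 1`. -/
noncomputable def sGen (c : Module.End K (V ⊗[K] V)) (J : Module.End K V) (N i : ℕ) :
    Module.End K (TPow K V N) :=
  if i = N - 1 then opLast J N else opAt c i N

theorem sGen_bRel {c : Module.End K (V ⊗[K] V)} {J : Module.End K V}
    (hbraid :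
      ((TensorProduct.assoc K V V V).conj (LinearMap.rTensor V c)) * (LinearMap.lTensor V c)
          * ((TensorProduct.assoc K V V V).conj (LinearMap.rTensor V c))
        = (LinearMap.lTensor V c)
          * ((TensorProduct.assoc K V V V).conj (LinearMap.rTensor V c))
          * (LinearMap.lTensor V c))
    (hrefl : c * LinearMap.lTensor V J * c * LinearMap.lTensor V J
        = LinearMap.lTensor V J * c * LinearMap.lTensor V J * c) (N : ℕ) :
    BRel (sGen c J N) (N - 1) where
  comm i j h hj := by
    have hi : i ≠ N - 1 := by omega
    by_cases hj' : j = N - 1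
    · simp only [sGen, if_neg hi, if_pos hj']
      exact opAt_opLast_comm c J i N (by omega)
    · simp only [sGen, if_neg hi, if_neg hj']
      exact opAt_comm c i j N h
  braid i h := by
    simp only [sGen, if_neg (show i ≠ N - 1 by omega), if_neg (show i + 1 ≠ N - 1 by omega)]
    exact opAt_braid hbraid i N (by omega)
  four i h := by
    obtain rfl : N = i + 2 := by omega
    simp only [sGen, if_neg (show i ≠ i + 2 - 1 by omega), if_pos h]
    exact opAt_opLast_four hrefl i

theorem sGen_isUnit {c : Module.End K (V ⊗[K] V)} {J : Module.End K V} (hc : IsUnit c)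
    (hJ : IsUnit J) (N i : ℕ) : IsUnit (sGen c J N i) := by
  unfold sGen
  split_ifs
  · exact opLast_isUnit hJ N
  · exact opAt_isUnit hc i N

theorem Tb_eq_sGen (c : Module.End K (V ⊗[K] V)) (J : Module.End K V) (m n i : ℕ)
    (hi : 1 ≤ i) (hin : i ≤ n) : Tb c J m n i = sGen c J (m + n) (m + i - 1) := by
  by_cases h : i = n
  · simp [Tb, sGen, h]
  · rw [Tb, sGen, if_neg h, if_neg (show m + i - 1 ≠ m + n - 1 by omega)]

theorem Dop_eq_Drec (c : Module.End K (V ⊗[K] V)) (J : Module.End K V) (m n : ℕ) (hn : 1 ≤ n) :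
    Dop c m n = Drec (sGen c J (m + n)) m := by
  rw [← Dprod_eq_Drec, Dop]
  congr 2
  · refine List.map_congr_left fun k hk => ?_
    rw [List.mem_range] at hk
    rw [sGen, if_neg (show _ ≠ m + n - 1 by omega)]
  · refine List.map_congr_left fun k hk => ?_
    rw [List.mem_range] at hk
    rw [sGen, if_neg (show _ ≠ m + n - 1 by omega)]

end Tensor

/-- With `T_i := c_{m+i}` (`1 ≤ i ≤ n−1`), `T_n := J` in the last factor,
`P_1 := T_1⋯T_{n−1}T_nT_{n−1}⋯T_1`, `D` the double braiding of the first `m` factors past the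
`(m+1)`-st, and `T_0 := P_1⁻¹ ∘ D⁻¹`, the operators `T_0, …, T_n` satisfy the defining
relations of the affine braid group of type `C∨Cₙ`; hence they define a representation of
this affine braid group on `W = V^{⊗(m+n)}`. -/
theorem affine_braid_group_CCn_representation
    (K : Type) [Field K] (V : Type) [AddCommGroup V] [Module K V]
    (c : Module.End K (TensorProduct K V V)) (hc : IsUnit c)
    (J : Module.End K V) (hJ : IsUnit J)
    (hbraid :
      ((TensorProduct.assoc K V V V).conj (LinearMap.rTensor V c)) * (LinearMap.lTensor V c)
          * ((TensorProduct.assoc K V V V).conj (LinearMap.rTensor V c))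
        = (LinearMap.lTensor V c)
          * ((TensorProduct.assoc K V V V).conj (LinearMap.rTensor V c))
          * (LinearMap.lTensor V c))
    (hrefl : c * LinearMap.lTensor V J * c * LinearMap.lTensor V J
        = LinearMap.lTensor V J * c * LinearMap.lTensor V J * c)
    (m n : ℕ) (hm : 1 ≤ m) (hn : 2 ≤ n) :
    IsUnit (Dop c m n * Pel (Tb c J m n) n 1) ∧
    (∀ i j : ℕ, i + 2 ≤ j → j ≤ n → Taff c J m n i * Taff c J m n j
        = Taff c J m n j * Taff c J m n i) ∧
    (∀ i : ℕ, 1 ≤ i → i + 2 ≤ n →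
        Taff c J m n i * Taff c J m n (i + 1) * Taff c J m n i
          = Taff c J m n (i + 1) * Taff c J m n i * Taff c J m n (i + 1)) ∧
    (Taff c J m n 0 * Taff c J m n 1 * Taff c J m n 0 * Taff c J m n 1
        = Taff c J m n 1 * Taff c J m n 0 * Taff c J m n 1 * Taff c J m n 0) ∧
    (Taff c J m n (n - 1) * Taff c J m n n * Taff c J m n (n - 1) * Taff c J m n n
        = Taff c J m n n * Taff c J m n (n - 1) * Taff c J m n n * Taff c J m n (n - 1)) := by
  have hs := sGen_bRel hbraid hrefl (m + n)
  have hu := sGen_isUnit hc hJ (m + n)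
  have hD := Dop_eq_Drec c J m n (by omega)
  have hT : ∀ i, 1 ≤ i → i ≤ n →
      Taff c J m n i = sGen c J (m + n) (m + i - 1) := fun i hi hin => by
    rw [Taff, if_neg (by omega), Tb_eq_sGen c J m n i hi hin]
  have hPel := Pel_eq_Prec (s := sGen c J (m + n)) (t := Tb c J m n) (m := m) (n := n)
    fun i hi hin => Tb_eq_sGen c J m n i hi hin
  have hP := hPel (n - 1) (by omega)
  rw [show n - (n - 1) = 1 by omega] at hP
  have hDu := Drec_isUnit hu m
  have hX : IsUnit (Dop c m n * Pel (Tb c J m n) n 1) := by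
    rw [hD, hP]
    exact hDu.mul (Prec_isUnit hu _ _)
  have hT0 : Taff c J m n 0 = Ring.inverse (Dop c m n * Pel (Tb c J m n) n 1) := if_pos rfl
  refine ⟨hX, ?_, ?_, ?_, ?_⟩
  · intro i j hij hj
    rw [hT j (by omega) hj]
    rcases Nat.eq_zero_or_pos i with rfl | hi
    · rw [hT0]
      -- `D` only involves `s 0, …, s (m-1)`, and `P_1` commutes with every later generator
      have hcomm : Commute (Dop c m n * Pel (Tb c J m n) n 1)
          (sGen c J (m + n) (m + j - 1)) := by
        rw [hD, hP]
        refine Commute.symm (Commute.mul_right (Drec_comm fun i hi => ?_) ?_)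
        · exact (hs.comm i (m + j - 1) (by omega) (by omega)).symm
        · exact hs.Prec_comm_gt (by omega) (by omega) (by omega)
      obtain ⟨x, hx⟩ := hX
      rw [← hx] at hcomm ⊢
      rw [Ring.inverse_unit]
      exact hcomm.units_inv_left
    · rw [hT i hi (by omega)]
      exact hs.comm _ _ (by omega) (by omega)
  · intro i hi hin
    rw [hT i hi (by omega), hT (i + 1) (by omega) (by omega), show m + (i + 1) - 1 = m + i - 1 + 1 by omega]
    exact hs.braid _ (by omega)
  · rw [hT 1 le_rfl (by omega), hT0, hD, hP, show m + 1 - 1 = m by omega]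
    obtain ⟨k, rfl⟩ : ∃ k, n = k + 2 := ⟨n - 2, by omega⟩
    have hstep : Prec (sGen c J (m + (k + 2))) (m + (k + 2) - 1) (k + 2 - 1)
        = sGen c J (m + (k + 2)) m * Prec (sGen c J (m + (k + 2))) (m + (k + 2) - 1) k
          * sGen c J (m + (k + 2)) m := by
      rw [show k + 2 - 1 = k + 1 by omega, Prec,
        show m + (k + 2) - 1 - (k + 1) = m by omega]
    rw [hstep]
    have hd4 := hs.Drec_four (k := m) (by omega)
    have hp4 := hs.Prec_four (k := k) (j := m) (by omega)
    have hdp : Commute (Drec (sGen c J (m + (k + 2))) m)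
        (Prec (sGen c J (m + (k + 2))) (m + (k + 2) - 1) k) :=
      Prec_comm fun i hi hi' =>
        (Drec_comm fun l hl => (hs.comm l i (by omega) hi').symm).symm
    exact fourTerm_ringInverse hDu (hu m) (Prec_isUnit hu _ k) hdp hd4 hp4
  · rw [hT (n - 1) (by omega) (by omega), hT n (by omega) le_rfl,
      show m + n - 1 = m + (n - 1) - 1 + 1 by omega]
    exact hs.four _ (by omega)
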